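/- Let φ be an invertible RDS on 𝕊¹ and let q:Ω→𝕊¹ be an 𝓕₊-measurable function such that for each t∈𝕋⁺, φ(t,ω)q(ω)=q(θ^tω) for ℙ-almost all ω∈Ω. Then the pushforward measure q_*ℙ is an ergodic measure for the transition family (φ̄ₓᵗ) given by φ̄ₓᵗ(A)=ℙ(ω : φ(t,ω)⁻¹(x)∈A), and q_*ℙ is either atomless or a Dirac mass at a deterministic fixed point of φ. -/

import Mathlib

open MeasureTheory Filter Topology Set ENNReal

noncomputable section

/-- The natural projection `π : ℝ → 𝕊¹ = ℝ/ℤ`. -/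
def circleProj (x : ℝ) : UnitAddCircle := (x : UnitAddCircle)

/-- `f` is an orientation-preserving homeomorphism of the circle: it admits a strictly
monotone degree-one lift. -/
def OrientPreserving (f : UnitAddCircle ≃ₜ UnitAddCircle) : Prop :=
  ∃ F : ℝ → ℝ, StrictMono F ∧ (∀ x : ℝ, F (x + 1) = F x + 1) ∧
    ∀ x : ℝ, f (circleProj x) = circleProj (F x)

/-- The anticlockwise distance `d₊(x,y) = min {r ≥ 0 : π(x' + r) = y}` (`x'` any lift of `x`). -/
def dPlus (x y : UnitAddCircle) : ℝ :=
  sInf {r : ℝ | 0 ≤ r ∧ ∃ x' : ℝ, circleProj x' = x ∧ circleProj (x' + r) = y}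

/-- An invertible random dynamical system on the circle, in discrete or continuous time,
driven by a stationary memoryless noise process. -/
structure RDS (Ω : Type) [m : MeasurableSpace Ω] where
  /-- the time set `𝕋⁺`: either `ℕ ∪ {0}` or `[0,∞)`, viewed inside `ℝ` -/
  T : Set ℝ
  T_cases : T = Set.range (fun n : ℕ => (n : ℝ)) ∨ T = Set.Ici (0 : ℝ)
  /-- the filtration -/
  F : ℝ → MeasurableSpace Ω
  F_le : ∀ t ∈ T, F t ≤ m
  F_mono : ∀ s ∈ T, ∀ t ∈ T, s ≤ t → F s ≤ F t
  /-- the probability measure -/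
  P : Measure Ω
  P_prob : IsProbabilityMeasure P
  /-- the time-shift maps on the noise space -/
  θ : ℝ → Ω → Ω
  θ_zero : θ 0 = id
  θ_add : ∀ s ∈ T, ∀ t ∈ T, θ (s + t) = θ t ∘ θ s
  θ_preserving : ∀ t ∈ T, MeasurePreserving (θ t) P P
  θ_adapted : ∀ s ∈ T, ∀ t ∈ T, @Measurable Ω Ω (F (s + t)) (F s) (θ t)
  θ_indep : ∀ t ∈ T, ∀ E A : Set Ω, MeasurableSet[F t] E →
    MeasurableSet[⨆ s ∈ T, F s] A → P (E ∩ θ t ⁻¹' A) = P E * P A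
  /-- the random homeomorphisms -/
  φ : ℝ → Ω → UnitAddCircle ≃ₜ UnitAddCircle
  φ_orient : ∀ t ∈ T, ∀ ω, OrientPreserving (φ t ω)
  φ_meas : ∀ t ∈ T, @Measurable (Ω × UnitAddCircle) UnitAddCircle
    ((F t).prod inferInstance) inferInstance (fun p => φ t p.1 p.2)
  φ_zero : ∀ ω, φ 0 ω = Homeomorph.refl UnitAddCircle
  φ_cocycle : ∀ s ∈ T, ∀ t ∈ T, ∀ ω x, φ (s + t) ω x = φ t (θ s ω) (φ s ω x)
  φ_cadlag_right : ∀ ω, ∀ t ∈ T, ∀ tn : ℕ → ℝ, (∀ n, tn n ∈ T) → Antitone tn →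
    Tendsto tn atTop (𝓝 t) → ∀ (xn : ℕ → UnitAddCircle) (x : UnitAddCircle),
      Tendsto xn atTop (𝓝 x) →
      Tendsto (fun n => φ (tn n) ω (xn n)) atTop (𝓝 (φ t ω x))
  /-- the left-limit maps -/
  φ_left_lim : ℝ → Ω → UnitAddCircle → UnitAddCircle
  φ_cadlag_left : ∀ ω, ∀ t ∈ T, ∀ tn : ℕ → ℝ, (∀ n, tn n ∈ T) → StrictMono tn →
    Tendsto tn atTop (𝓝 t) → ∀ (xn : ℕ → UnitAddCircle) (x : UnitAddCircle),
      Tendsto xn atTop (𝓝 x) →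
      Tendsto (fun n => φ (tn n) ω (xn n)) atTop (𝓝 (φ_left_lim t ω x))

/-- A probability measure on the circle is atomless if every singleton is null. -/
def Atomless (ρ : Measure UnitAddCircle) : Prop := ∀ x, ρ {x} = 0

/-- A measure on the circle has full support. -/
def FullSupport (ρ : Measure UnitAddCircle) : Prop :=
  ∀ U : Set UnitAddCircle, IsOpen U → U.Nonempty → 0 < ρ U

/-- The (topological) support of a measure on the circle. -/
def msupport (ρ : Measure UnitAddCircle) : Set UnitAddCircle :=
  {x | ∀ U : Set UnitAddCircle, IsOpen U → x ∈ U → 0 < ρ U}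

namespace RDS

variable {Ω : Type} [m : MeasurableSpace Ω] (S : RDS Ω)

/-- the future σ-algebra `𝓕₊ = σ(𝓕_t : t ∈ 𝕋⁺)`. -/
def Fplus : MeasurableSpace Ω := ⨆ t ∈ S.T, S.F t

/-- The filter "t → ∞ along the time set 𝕋⁺". -/
def tFilter : Filter ℝ := atTop ⊓ 𝓟 S.T

/-- two-point contractibility. -/
def Contractible : Prop := ∀ x y : UnitAddCircle, x ≠ y →
  0 < S.P {ω | ∃ t ∈ S.T, dist (S.φ t ω x) (S.φ t ω y) < dist x y}

/-- compressibility. -/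
def Compressible : Prop := ∀ x y : UnitAddCircle, x ≠ y →
  0 < S.P {ω | ∃ t ∈ S.T, dPlus (S.φ t ω x) (S.φ t ω y) < dPlus x y}

/-- `p` is a deterministic fixed point. -/
def DetFixedPoint (p : UnitAddCircle) : Prop :=
  ∀ᵐ ω ∂S.P, ∀ t ∈ S.T, S.φ t ω p = p

/-- `A` is forward-invariant. -/
def ForwardInvariant (A : Set UnitAddCircle) : Prop :=
  ∀ᵐ ω ∂S.P, ∀ t ∈ S.T, ⇑(S.φ t ω) '' A ⊆ A

/-- reverse-minimal dynamics: the only open forward-invariant sets are `∅` and `𝕊¹`. -/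
def ReverseMinimal : Prop :=
  ∀ A : Set UnitAddCircle, IsOpen A → S.ForwardInvariant A → A = ∅ ∨ A = Set.univ

/-- synchronisation. -/
def Synchronising : Prop := ∀ x y : UnitAddCircle,
  S.P {ω | Tendsto (fun t => dist (S.φ t ω x) (S.φ t ω y)) S.tFilter (𝓝 0)} = 1

/-- everywhere local stability. -/
def EverywhereLocallyStable : Prop := ∀ x : UnitAddCircle,
  S.P {ω | ∃ U : Set UnitAddCircle, IsOpen U ∧ x ∈ U ∧
    Tendsto (fun t => volume (⇑(S.φ t ω) '' U)) S.tFilter (𝓝 0)} = 1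

/-- stable synchronisation. -/
def StablySynchronising : Prop := S.Synchronising ∧ S.EverywhereLocallyStable

/-- `ρ` is reverse-stationary: `ρ(A) = ∫ ρ(φ(t,ω)A) ℙ(dω)` for all `t ∈ 𝕋⁺`, Borel `A`. -/
def ReverseStationary (ρ : Measure UnitAddCircle) : Prop :=
  ∀ t ∈ S.T, ∀ A : Set UnitAddCircle, MeasurableSet A →
    ρ A = ∫⁻ ω, ρ (⇑(S.φ t ω) '' A) ∂S.P

/-- `r` is a crack point of `ω`. -/
def CrackPoint (ω : Ω) (r : UnitAddCircle) : Prop :=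
  ∀ G : Set UnitAddCircle, IsClosed G → r ∉ G →
    Tendsto (fun t => volume (⇑(S.φ t ω) '' G)) S.tFilter (𝓝 0)

/-- the set of contractive sample points. -/
def Ωc : Set Ω := {ω | ∃ r, S.CrackPoint ω r}

/-- the reverse transition probabilities `φ̄ₓᵗ(A) = ℙ(ω : φ(t,ω)⁻¹(x) ∈ A)`. -/
def revTrans (t : ℝ) (x : UnitAddCircle) (A : Set UnitAddCircle) : ℝ≥0∞ :=
  S.P {ω | (S.φ t ω).symm x ∈ A}

/-- the forward transition probabilities `φₓᵗ(A) = ℙ(ω : φ(t,ω)x ∈ A)`. -/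
def fwdTrans (t : ℝ) (x : UnitAddCircle) (A : Set UnitAddCircle) : ℝ≥0∞ :=
  S.P {ω | S.φ t ω x ∈ A}

/-- `ρ` is stationary for a transition family `ν`. -/
def StationaryFor (ν : ℝ → UnitAddCircle → Set UnitAddCircle → ℝ≥0∞)
    (ρ : Measure UnitAddCircle) : Prop :=
  ∀ t ∈ S.T, ∀ A : Set UnitAddCircle, MeasurableSet A → ρ A = ∫⁻ x, ν t x A ∂ρ

/-- `ρ` is ergodic for a transition family `ν`. -/
def ErgodicFor (ν : ℝ → UnitAddCircle → Set UnitAddCircle → ℝ≥0∞)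
    (ρ : Measure UnitAddCircle) : Prop :=
  S.StationaryFor ν ρ ∧ ∀ A : Set UnitAddCircle, MeasurableSet A →
    (∀ t ∈ S.T, ∀ᵐ x ∂ρ, x ∈ A → ν t x A = 1) → ρ A = 0 ∨ ρ A = 1

end RDS

/-!
The driving noise is memoryless, so `𝓕ₜ` is independent of `q ∘ θᵗ`, whose law is again `ρ = q_*ℙ`;
and almost surely `q ∘ θᵗ = φ(t) q`. Thus `q = φ(t)⁻¹ (q ∘ θᵗ)` is a Markov step of the reverse
transition family started from `ρ`, and conversely the conditional law of `q` given `𝓕ₜ` is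
`B ↦ ρ(φ(t) B)`.

An event of `𝓕₊` which is independent of every `𝓕ₜ` is independent of itself, hence trivial. If `A`
is invariant for the reverse transitions, then `{q ∈ A}` and `{q ∘ θᵗ ∈ A}` agree up to a null set,
so `{q ∈ A}` is such an event: this is ergodicity. If `ρ` has atoms, let `p` be one of maximal mass.
Then `ρ{φ(t) p} ≤ ρ{p}`, while both sides have the same expectation; so the conditional probability
`ρ{φ(t) p}` of `{q = p}` given `𝓕ₜ` is almost surely constant, `{q = p}` is again such an event, and
`q = p` almost surely.
-/

open ProbabilityTheory

section Measurability

variable {α X Y : Type*} {mα : MeasurableSpace α}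
  [TopologicalSpace X] [TopologicalSpace.PseudoMetrizableSpace X]
  [TopologicalSpace.SeparableSpace X] [MeasurableSpace X] [BorelSpace X]
  [PseudoEMetricSpace Y] [SecondCountableTopology Y] [MeasurableSpace Y] [OpensMeasurableSpace Y]

theorem measurable_uncurry_homeomorph_symm {φ : α → X ≃ₜ Y}
    (hφ : ∀ x, Measurable fun a => φ a x) :
    Measurable fun z : α × Y => (φ z.1).symm z.2 := by
  refine measurable_of_isClosed fun K hK => ?_
  obtain ⟨D, hDK, hD, hKD⟩ :=
    (TopologicalSpace.IsSeparable.of_separableSpace K).exists_countable_dense_subset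
  have hmem (z : α × Y) : (φ z.1).symm z.2 ∈ K ↔ ⨅ d ∈ D, edist z.2 (φ z.1 d) = 0 :=
    calc (φ z.1).symm z.2 ∈ K ↔ z.2 ∈ φ z.1 '' closure D := by
          rw [(closure_minimal hDK hK).antisymm hKD, Homeomorph.image_eq_preimage_symm,
            mem_preimage]
      _ ↔ Metric.infEDist z.2 (φ z.1 '' D) = 0 := by
          rw [Homeomorph.image_closure, Metric.mem_closure_iff_infEDist_zero]
      _ ↔ ⨅ d ∈ D, edist z.2 (φ z.1 d) = 0 := by rw [Metric.infEDist, iInf_image]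
  have hdist : Measurable fun z : α × Y => ⨅ d ∈ D, edist z.2 (φ z.1 d) :=
    .biInf D hD fun d _ => measurable_snd.edist ((hφ d).comp measurable_fst)
  simpa only [preimage, hmem] using! hdist (measurableSet_singleton 0)

end Measurability

section Independence

variable {Ω α β : Type*} {mΩ : MeasurableSpace Ω} {mα : MeasurableSpace α}
  {mβ : MeasurableSpace β} {μ : Measure Ω} [IsFiniteMeasure μ] {f : Ω → α} {g : Ω → β}
  {C : Set (α × β)}

theorem measure_mem_and_prodMk_mem_eq_setLIntegral (hf : Measurable f) (hg : Measurable g)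
    (hfg : IndepFun f g μ) (hC : MeasurableSet C) {G : Set α} (hG : MeasurableSet G) :
    μ {ω | f ω ∈ G ∧ (f ω, g ω) ∈ C} = ∫⁻ ω in f ⁻¹' G, μ.map g {y | (f ω, y) ∈ C} ∂μ :=
  calc μ {ω | f ω ∈ G ∧ (f ω, g ω) ∈ C}
      = μ.map (fun ω => (f ω, g ω)) (C ∩ G ×ˢ univ) := by
        rw [Measure.map_apply (hf.prodMk hg) (hC.inter (hG.prod .univ))]
        congr 1 with ω
        simp [and_comm]
    _ = (((μ.map f).restrict G).prod (μ.map g)) C := by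
        rw [hfg.map_prod_eq_prod_map_map hf.aemeasurable hg.aemeasurable,
          ← Measure.restrict_apply hC, ← Measure.prod_restrict, Measure.restrict_univ]
    _ = ∫⁻ ω in f ⁻¹' G, μ.map g {y | (f ω, y) ∈ C} ∂μ := by
        rw [Measure.prod_apply hC, setLIntegral_map hG (measurable_measure_prodMk_left hC) hf]
        rfl

theorem measure_prodMk_mem_and_mem_eq_setLIntegral_map (hf : Measurable f) (hg : Measurable g)
    (hfg : IndepFun f g μ) (hC : MeasurableSet C) {B : Set β} (hB : MeasurableSet B) :
    μ {ω | (f ω, g ω) ∈ C ∧ g ω ∈ B} = ∫⁻ y in B, μ {ω | (f ω, y) ∈ C} ∂(μ.map g) :=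
  calc μ {ω | (f ω, g ω) ∈ C ∧ g ω ∈ B}
      = μ.map (fun ω => (f ω, g ω)) (C ∩ univ ×ˢ B) := by
        rw [Measure.map_apply (hf.prodMk hg) (hC.inter (.prod .univ hB))]
        congr 1 with ω
        simp
    _ = ((μ.map f).prod ((μ.map g).restrict B)) C := by
        rw [hfg.map_prod_eq_prod_map_map hf.aemeasurable hg.aemeasurable,
          ← Measure.restrict_apply hC, ← Measure.prod_restrict, Measure.restrict_univ]
    _ = ∫⁻ y in B, μ {ω | (f ω, y) ∈ C} ∂(μ.map g) := by
        rw [Measure.prod_apply_symm hC]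
        refine lintegral_congr fun y => ?_
        rw [Measure.map_apply hf (measurable_prodMk_right hC)]
        rfl

end Independence

theorem measure_eq_zero_or_one_of_directed_iSup {ι Ω : Type*} {m : ι → MeasurableSpace Ω}
    {m₀ : MeasurableSpace Ω} {μ : Measure Ω} [IsProbabilityMeasure μ] (hle : ∀ i, m i ≤ m₀)
    (hdir : Directed (· ≤ ·) m) {E : Set Ω} (hE : MeasurableSet[⨆ i, m i] E)
    (hind : ∀ i G, MeasurableSet[m i] G → μ (G ∩ E) = μ G * μ E) : μ E = 0 ∨ μ E = 1 := by
  have hE₀ : MeasurableSet E := iSup_le hle _ hE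
  have hgen : .generateFrom {E} ≤ m₀ := MeasurableSpace.generateFrom_le (by simpa using hE₀)
  have hindep (i) : Indep (m i) (.generateFrom {E}) μ :=
    IndepSets.indep (hle i) hgen
      (@MeasurableSpace.isPiSystem_measurableSet _ (m i)) (.singleton E)
      (@MeasurableSpace.generateFrom_measurableSet _ (m i)).symm rfl
      ((IndepSets_iff _ _ _).2 (by rintro G _ hG rfl; exact hind i G hG))
  have hself : Indep (⨆ i, m i) (.generateFrom {E}) μ :=
    indep_iSup_of_directed_le hindep hle hgen hdir
  refine measure_eq_zero_or_one_of_indepSet_self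
    ((indepSet_iff_measure_inter_eq_mul hE₀ hE₀ μ).2 ?_)
  exact (Indep_iff _ _ _).1 hself E E hE (MeasurableSpace.measurableSet_generateFrom rfl)

section FiniteMeasure

variable {Ω : Type*} [MeasurableSpace Ω] {μ : Measure Ω} [IsFiniteMeasure μ]

theorem preimage_ae_eq_self_of_measure_inter_eq {f : Ω → Ω} (hf : MeasurePreserving f μ μ)
    {E : Set Ω} (hE : MeasurableSet E) (h : μ (E ∩ f ⁻¹' E) = μ E) : f ⁻¹' E =ᵐ[μ] E := by
  have hinter := (hE.inter (hf.measurable hE)).nullMeasurableSet (μ := μ)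
  have hpre : μ (f ⁻¹' E) = μ E := hf.measure_preimage hE.nullMeasurableSet
  have hleft : (E ∩ f ⁻¹' E : Set Ω) =ᵐ[μ] E :=
    ae_eq_of_subset_of_measure_ge inter_subset_left h.ge hinter (measure_ne_top μ _)
  have hright : (E ∩ f ⁻¹' E : Set Ω) =ᵐ[μ] f ⁻¹' E :=
    ae_eq_of_subset_of_measure_ge inter_subset_right (hpre.trans h.symm).le hinter
      (measure_ne_top μ _)
  exact hright.symm.trans hleft

theorem exists_forall_measure_singleton_le [MeasurableSingletonClass Ω] {x₀ : Ω}
    (hx₀ : μ {x₀} ≠ 0) : ∃ p, μ {p} ≠ 0 ∧ ∀ x, μ {x} ≤ μ {p} := by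
  have hfin : {x | μ {x₀} ≤ μ {x}}.Finite :=
    Measure.finite_const_le_meas_of_disjoint_iUnion μ (pos_iff_ne_zero.2 hx₀)
      (fun x => measurableSet_singleton x)
      (fun x y hxy => by simpa [Function.onFun] using hxy) (measure_ne_top _ _)
  obtain ⟨p, hx₀p, hmax⟩ := Set.exists_max_image _ (fun x => μ {x}) hfin ⟨x₀, mem_ofPred.2 le_rfl⟩
  refine ⟨p, (hx₀p.trans_lt' (pos_iff_ne_zero.2 hx₀)).ne', fun x => ?_⟩
  exact (le_total (μ {x₀}) (μ {x})).elim (hmax x) fun h => h.trans hx₀p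

end FiniteMeasure

namespace RDS

variable {Ω : Type} [m : MeasurableSpace Ω] {S : RDS Ω} {t : ℝ}

instance (S : RDS Ω) : IsProbabilityMeasure S.P := S.P_prob

theorem Fplus_le (S : RDS Ω) : S.Fplus ≤ m := iSup₂_le S.F_le

theorem measure_eq_zero_or_one_of_indep_F {E : Set Ω} (hE : MeasurableSet[S.Fplus] E)
    (hind : ∀ t ∈ S.T, ∀ G, MeasurableSet[S.F t] G → S.P (G ∩ E) = S.P G * S.P E) :
    S.P E = 0 ∨ S.P E = 1 := by
  have hmono : Monotone fun t : S.T => S.F t := fun s t hst => S.F_mono s s.2 t t.2 hst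
  rw [Fplus, iSup_subtype'] at hE
  exact measure_eq_zero_or_one_of_directed_iSup (fun t : S.T => S.F_le t t.2) hmono.directed_le hE
    fun t => hind t t.2

theorem indep_F_comap_shift (ht : t ∈ S.T) : Indep (S.F t) (S.Fplus.comap (S.θ t)) S.P := by
  refine (Indep_iff _ _ _).2 ?_
  rintro G _ hG ⟨E, hE, rfl⟩
  rw [(S.θ_preserving t ht).measure_preimage (S.Fplus_le _ hE).nullMeasurableSet]
  exact S.θ_indep t ht G E hG hE

theorem measurable_φ_symm (ht : t ∈ S.T) :
    Measurable[(S.F t).prod inferInstance] fun z : Ω × UnitAddCircle => (S.φ t z.1).symm z.2 :=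
  measurable_uncurry_homeomorph_symm fun _ =>
    (S.φ_meas t ht).comp (@measurable_prodMk_right _ _ (S.F t) _ _)

theorem exists_countable_subset_T_antitone_approx (S : RDS Ω) :
    ∃ D ⊆ S.T, D.Countable ∧ ∀ t ∈ S.T, ∃ u : ℕ → ℝ,
      (∀ n, u n ∈ D) ∧ Antitone u ∧ Tendsto u atTop (𝓝 t) := by
  rcases S.T_cases with hT | hT
  · exact ⟨S.T, subset_rfl, hT ▸ countable_range _,
      fun t ht => ⟨fun _ => t, fun _ => ht, antitone_const, tendsto_const_nhds⟩⟩
  · refine ⟨S.T ∩ range ((↑) : ℚ → ℝ), inter_subset_left,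
      (countable_range _).mono inter_subset_right, fun t ht => ?_⟩
    obtain ⟨u, hu, htu, hlim⟩ := Real.exists_seq_rat_strictAnti_tendsto t
    rw [hT] at ht ⊢
    exact ⟨fun n => u n, fun n => ⟨(mem_Ici.1 ht).trans (htu n).le, mem_range_self _⟩,
      fun _ _ h => Rat.cast_le.2 (hu.antitone h), hlim⟩

theorem detFixedPoint_of_forall_ae {p : UnitAddCircle}
    (h : ∀ t ∈ S.T, ∀ᵐ ω ∂S.P, S.φ t ω p = p) : S.DetFixedPoint p := by
  obtain ⟨D, hDT, hD, happrox⟩ := S.exists_countable_subset_T_antitone_approx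
  filter_upwards [(ae_ball_iff hD).2 fun t ht => h t (hDT ht)] with ω hω t ht
  obtain ⟨u, huD, hu, hlim⟩ := happrox t ht
  have hφ : Tendsto (fun n => S.φ (u n) ω p) atTop (𝓝 (S.φ t ω p)) :=
    S.φ_cadlag_right ω t ht u (fun n => hDT (huD n)) hu hlim _ p tendsto_const_nhds
  simp only [hω _ (huD _)] at hφ
  exact tendsto_nhds_unique hφ tendsto_const_nhds

/-- `q` is a random fixed point of `S`: an `𝓕₊`-measurable random point of the circle which the
dynamics carries along the shift. The exceptional null set may depend on the time `t`. -/
structure IsRandomFixedPoint (S : RDS Ω) (q : Ω → UnitAddCircle) : Prop where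
  measurable_Fplus : Measurable[S.Fplus] q
  ae_apply_eq : ∀ t ∈ S.T, ∀ᵐ ω ∂S.P, S.φ t ω (q ω) = q (S.θ t ω)

namespace IsRandomFixedPoint

variable {q : Ω → UnitAddCircle} {A B : Set UnitAddCircle}

theorem measurable (hq : S.IsRandomFixedPoint q) : Measurable q :=
  hq.measurable_Fplus.mono S.Fplus_le le_rfl

theorem measurable_comp_shift (hq : S.IsRandomFixedPoint q) (ht : t ∈ S.T) :
    Measurable (q ∘ S.θ t) :=
  hq.measurable.comp (S.θ_preserving t ht).measurable

theorem map_comp_shift (hq : S.IsRandomFixedPoint q) (ht : t ∈ S.T) :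
    S.P.map (q ∘ S.θ t) = S.P.map q := by
  rw [← Measure.map_map hq.measurable (S.θ_preserving t ht).measurable,
    (S.θ_preserving t ht).map_eq]

theorem ae_symm_apply_eq (hq : S.IsRandomFixedPoint q) (ht : t ∈ S.T) :
    ∀ᵐ ω ∂S.P, (S.φ t ω).symm (q (S.θ t ω)) = q ω := by
  filter_upwards [hq.ae_apply_eq t ht] with ω hω
  rw [← hω, Homeomorph.symm_apply_apply]

/-- Here `id` takes values in `Ω` equipped with `𝓕ₜ`: the statement is that `𝓕ₜ` and `q ∘ θᵗ` are
independent. -/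
theorem indepFun_id_comp_shift (hq : S.IsRandomFixedPoint q) (ht : t ∈ S.T) :
    @IndepFun _ _ _ _ (S.F t) _ id (q ∘ S.θ t) S.P := by
  refine (@IndepFun_iff_Indep _ _ _ _ (S.F t) _ _ _ _).2 ?_
  rw [MeasurableSpace.comap_id, ← MeasurableSpace.comap_comp]
  exact indep_of_indep_of_le_right (indep_F_comap_shift ht)
    (MeasurableSpace.comap_mono hq.measurable_Fplus.comap_le)

theorem measure_inter_preimage_shift_eq_setLIntegral_revTrans (hq : S.IsRandomFixedPoint q)
    (ht : t ∈ S.T) (hA : MeasurableSet A) (hB : MeasurableSet B) :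
    S.P (q ⁻¹' A ∩ S.θ t ⁻¹' (q ⁻¹' B)) = ∫⁻ x in B, S.revTrans t x A ∂(S.P.map q) :=
  calc S.P (q ⁻¹' A ∩ S.θ t ⁻¹' (q ⁻¹' B))
      = S.P {ω | (S.φ t ω).symm (q (S.θ t ω)) ∈ A ∧ q (S.θ t ω) ∈ B} := by
        refine measure_congr (eventuallyEq_set.2 ?_)
        filter_upwards [hq.ae_symm_apply_eq ht] with ω hω
        simp [hω]
    _ = ∫⁻ x in B, S.revTrans t x A ∂(S.P.map (q ∘ S.θ t)) :=
        measure_prodMk_mem_and_mem_eq_setLIntegral_map (measurable_id'' (S.F_le t ht))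
          (hq.measurable_comp_shift ht) (hq.indepFun_id_comp_shift ht)
          (measurable_φ_symm ht hA) hB
    _ = ∫⁻ x in B, S.revTrans t x A ∂(S.P.map q) := by rw [hq.map_comp_shift ht]

theorem measure_inter_preimage_eq_setLIntegral_map_image (hq : S.IsRandomFixedPoint q)
    (ht : t ∈ S.T) {G : Set Ω} (hG : MeasurableSet[S.F t] G) (hB : MeasurableSet B) :
    S.P (G ∩ q ⁻¹' B) = ∫⁻ ω in G, S.P.map q (S.φ t ω '' B) ∂S.P :=
  calc S.P (G ∩ q ⁻¹' B)
      = S.P {ω | ω ∈ G ∧ (S.φ t ω).symm (q (S.θ t ω)) ∈ B} := by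
        refine measure_congr (eventuallyEq_set.2 ?_)
        filter_upwards [hq.ae_symm_apply_eq ht] with ω hω
        simp [hω]
    _ = ∫⁻ ω in G, S.P.map (q ∘ S.θ t) ((S.φ t ω).symm ⁻¹' B) ∂S.P :=
        measure_mem_and_prodMk_mem_eq_setLIntegral (measurable_id'' (S.F_le t ht))
          (hq.measurable_comp_shift ht) (hq.indepFun_id_comp_shift ht)
          (measurable_φ_symm ht hB) hG
    _ = ∫⁻ ω in G, S.P.map q (S.φ t ω '' B) ∂S.P := by
        simp only [hq.map_comp_shift ht, Homeomorph.image_eq_preimage_symm]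

theorem stationaryFor_revTrans (hq : S.IsRandomFixedPoint q) :
    S.StationaryFor S.revTrans (S.P.map q) := by
  intro t ht A hA
  rw [Measure.map_apply hq.measurable hA]
  simpa using hq.measure_inter_preimage_shift_eq_setLIntegral_revTrans ht hA .univ

theorem preimage_shift_ae_eq (hq : S.IsRandomFixedPoint q) (ht : t ∈ S.T) (hA : MeasurableSet A)
    (hinv : ∀ᵐ x ∂(S.P.map q), x ∈ A → S.revTrans t x A = 1) :
    S.θ t ⁻¹' (q ⁻¹' A) =ᵐ[S.P] q ⁻¹' A := by
  refine preimage_ae_eq_self_of_measure_inter_eq (S.θ_preserving t ht) (hq.measurable hA) ?_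
  rw [hq.measure_inter_preimage_shift_eq_setLIntegral_revTrans ht hA hA,
    setLIntegral_congr_fun_ae hA hinv, setLIntegral_one, Measure.map_apply hq.measurable hA]

theorem ergodicFor_revTrans (hq : S.IsRandomFixedPoint q) :
    S.ErgodicFor S.revTrans (S.P.map q) := by
  refine ⟨hq.stationaryFor_revTrans, fun A hA hinv => ?_⟩
  rw [Measure.map_apply hq.measurable hA]
  refine measure_eq_zero_or_one_of_indep_F (hq.measurable_Fplus hA) fun t ht G hG => ?_
  have hshift := hq.preimage_shift_ae_eq ht hA (hinv t ht)
  calc S.P (G ∩ q ⁻¹' A) = S.P (G ∩ S.θ t ⁻¹' (q ⁻¹' A)) :=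
        measure_congr ((ae_eq_refl G).inter hshift.symm)
    _ = S.P G * S.P (q ⁻¹' A) := S.θ_indep t ht G _ hG (hq.measurable_Fplus hA)

theorem ae_map_singleton_apply_eq (hq : S.IsRandomFixedPoint q) (ht : t ∈ S.T) {p : UnitAddCircle}
    (hp : ∀ x, S.P.map q {x} ≤ S.P.map q {p}) :
    ∀ᵐ ω ∂S.P, S.P.map q {S.φ t ω p} = S.P.map q {p} := by
  have hmean : ∫⁻ ω, S.P.map q {S.φ t ω p} ∂S.P = S.P.map q {p} := by
    rw [Measure.map_apply hq.measurable (measurableSet_singleton p)]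
    simpa using (hq.measure_inter_preimage_eq_setLIntegral_map_image ht .univ
      (measurableSet_singleton p)).symm
  exact ae_eq_of_ae_le_of_lintegral_le (.of_forall fun ω => hp _)
    (hmean ▸ measure_ne_top _ _) aemeasurable_const (by simp [hmean])

theorem measure_preimage_singleton_eq_zero_or_one (hq : S.IsRandomFixedPoint q) {p : UnitAddCircle}
    (hp : ∀ x, S.P.map q {x} ≤ S.P.map q {p}) :
    S.P (q ⁻¹' {p}) = 0 ∨ S.P (q ⁻¹' {p}) = 1 := by
  have hmeas := measurableSet_singleton p
  refine measure_eq_zero_or_one_of_indep_F (hq.measurable_Fplus hmeas) fun t ht G hG => ?_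
  calc S.P (G ∩ q ⁻¹' {p}) = ∫⁻ ω in G, S.P.map q {S.φ t ω p} ∂S.P := by
        simpa only [image_singleton] using
          hq.measure_inter_preimage_eq_setLIntegral_map_image ht hG hmeas
    _ = ∫⁻ _ in G, S.P.map q {p} ∂S.P :=
        lintegral_congr_ae (ae_restrict_of_ae (hq.ae_map_singleton_apply_eq ht hp))
    _ = S.P G * S.P (q ⁻¹' {p}) := by
        rw [setLIntegral_const, Measure.map_apply hq.measurable hmeas, mul_comm]

theorem exists_ae_eq_const (hq : S.IsRandomFixedPoint q) (hatom : ¬ Atomless (S.P.map q)) :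
    ∃ p, ∀ᵐ ω ∂S.P, q ω = p := by
  obtain ⟨x₀, hx₀⟩ := not_forall.1 hatom
  obtain ⟨p, hp₀, hmax⟩ := exists_forall_measure_singleton_le hx₀
  have hmeas := measurableSet_singleton p
  rw [Measure.map_apply hq.measurable hmeas] at hp₀
  exact ⟨p, (prob_compl_eq_zero_iff (hq.measurable hmeas)).2
    ((hq.measure_preimage_singleton_eq_zero_or_one hmax).resolve_left hp₀)⟩

theorem detFixedPoint_of_ae_eq_const (hq : S.IsRandomFixedPoint q) {p : UnitAddCircle}
    (hp : ∀ᵐ ω ∂S.P, q ω = p) : S.DetFixedPoint p := by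
  refine detFixedPoint_of_forall_ae fun t ht => ?_
  filter_upwards [hp, hq.ae_apply_eq t ht, (S.θ_preserving t ht).quasiMeasurePreserving.ae hp]
    with ω hqω hφω hqθω
  rwa [hqω, hqθω] at hφω

end IsRandomFixedPoint

end RDS

/-- the law of an `𝓕₊`-measurable random fixed point `q` is ergodic for the
reverse transition probabilities, and is either atomless or a Dirac mass at a deterministic
fixed point. -/
theorem randomFixedPoint_law_ergodic_atomless_or_dirac
    {Ω : Type} [MeasurableSpace Ω] (S : RDS Ω) (q : Ω → UnitAddCircle)
    (hq_meas : @Measurable Ω UnitAddCircle S.Fplus _ q)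
    (hq_fix : ∀ t ∈ S.T, ∀ᵐ ω ∂S.P, S.φ t ω (q ω) = q (S.θ t ω)) :
    S.ErgodicFor S.revTrans (S.P.map q) ∧
      (Atomless (S.P.map q) ∨
        ∃ p : UnitAddCircle, S.DetFixedPoint p ∧ S.P.map q = Measure.dirac p) := by
  have hq : S.IsRandomFixedPoint q := ⟨hq_meas, hq_fix⟩
  refine ⟨hq.ergodicFor_revTrans, or_iff_not_imp_left.2 fun hatom => ?_⟩
  obtain ⟨p, hp⟩ := hq.exists_ae_eq_const hatom
  refine ⟨p, hq.detFixedPoint_of_ae_eq_const hp, ?_⟩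
  rw [Measure.map_congr hp, Measure.map_const, measure_univ, one_smul]
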